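/- Let n > 1 and u ∈ C_0^∞(ℝⁿ). Then lim_{s→0⁺} (−Δ)^s u(x) = u(x) for every x ∈ ℝⁿ. -/

import Mathlib

open MeasureTheory Filter Set
open scoped ENNReal
noncomputable section

/-- The normalizing constant `C(n,s)` of the fractional Laplacian. -/
def fracLapConst (n : ℕ) (hn : 0 < n) (s : ℝ) : ℝ :=
  (∫ ζ : EuclideanSpace ℝ (Fin n), (1 - Real.cos (ζ ⟨0, hn⟩)) / ‖ζ‖ ^ ((n : ℝ) + 2 * s))⁻¹

/-- The fractional Laplacian `(−Δ)^s`, via the weighted second-order differential quotient. -/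
def fracLap (n : ℕ) (hn : 0 < n) (s : ℝ) (u : EuclideanSpace ℝ (Fin n) → ℝ)
    (x : EuclideanSpace ℝ (Fin n)) : ℝ :=
  -(1 / 2) * fracLapConst n hn s *
    ∫ y : EuclideanSpace ℝ (Fin n),
      (u (x + y) + u (x - y) - 2 * u x) / ‖y‖ ^ ((n : ℝ) + 2 * s)

/-! As `s → 0⁺`, the kernel `‖y‖ ^ (-(d + 2 * s))` has a tail of mass about `ω / (2 * s)`, where `ω`
is the area of the unit sphere, and this mass escapes to infinity. After multiplication by `s`, the
contribution of any bounded region disappears, and only the mean value at infinity of the integrand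
survives, times `ω / 2`. For the second difference of an integrable `u` at `x` this mean value is
`-2 * u x`. For `1 - cos ζ₁` it is `1`: translation by half a period changes the sign of the cosine,
but moves the kernel, capped near the origin, only by a bounded amount in `L¹`. Hence
`C(n,s) ~ 2 * s / ω`, and the factors `ω` and `s` cancel. -/

open Module Topology

section CappedKernel

variable {E : Type*} [NormedAddCommGroup E] {q : ℝ}

/-- The kernel `‖y‖ ^ (-q)`, replaced by `1` on the unit ball. It agrees with the kernel of the
fractional Laplacian at infinity, but has no singularity at the origin. -/
def cappedKernel (q : ℝ) (y : E) : ℝ := max 1 ‖y‖ ^ (-q)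

lemma cappedKernel_pos (q : ℝ) (y : E) : 0 < cappedKernel q y := by
  unfold cappedKernel; positivity

lemma cappedKernel_le_one (hq : 0 ≤ q) (y : E) : cappedKernel q y ≤ 1 :=
  Real.rpow_le_one_of_one_le_of_nonpos (le_max_left _ _) (neg_nonpos.2 hq)

lemma cappedKernel_of_norm_le_one {y : E} (hy : ‖y‖ ≤ 1) : cappedKernel q y = 1 := by
  rw [cappedKernel, max_eq_left hy, Real.one_rpow]

lemma cappedKernel_of_one_le_norm {y : E} (hy : 1 ≤ ‖y‖) : cappedKernel q y = (‖y‖ ^ q)⁻¹ := by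
  rw [cappedKernel, max_eq_right hy, Real.rpow_neg (norm_nonneg y)]

lemma continuous_cappedKernel : Continuous (cappedKernel q : E → ℝ) :=
  (continuous_const.max continuous_norm).rpow_const fun _ =>
    Or.inl (zero_lt_one.trans_le (le_max_left _ _)).ne'

lemma abs_rpow_neg_sub_rpow_neg_le {a b : ℝ} (ha : 0 < a) (hb : 0 < b) (hq : 0 ≤ q) :
    |a ^ (-q) - b ^ (-q)| ≤ q * (a ^ (-(q + 1)) + b ^ (-(q + 1))) * |a - b| := by
  wlog hab : a ≤ b generalizing a b
  · rw [abs_sub_comm, abs_sub_comm a, add_comm (a ^ _)]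
    exact this hb ha (le_of_not_ge hab)
  have hderiv : ∀ t ∈ Ici a, ‖-q * t ^ (-q - 1)‖ ≤ q * a ^ (-(q + 1)) := fun t (ht : a ≤ t) => by
    rw [norm_mul, norm_neg, Real.norm_of_nonneg hq,
      Real.norm_of_nonneg (Real.rpow_nonneg (ha.le.trans ht) _), ← neg_add']
    gcongr q * ?_
    exact Real.rpow_le_rpow_of_nonpos ha ht (by linarith)
  calc |a ^ (-q) - b ^ (-q)|
      ≤ q * a ^ (-(q + 1)) * |a - b| :=
        (convex_Ici a).norm_image_sub_le_of_norm_hasDerivWithin_le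
          (fun t (ht : a ≤ t) => (Real.hasDerivAt_rpow_const
            (Or.inl (ha.trans_le ht).ne')).hasDerivWithinAt) hderiv hab self_mem_Ici
    _ ≤ q * (a ^ (-(q + 1)) + b ^ (-(q + 1))) * |a - b| := by
        gcongr
        exact le_add_of_nonneg_right (by positivity)

lemma abs_cappedKernel_sub_le (hq : 0 ≤ q) (x y : E) :
    |cappedKernel q x - cappedKernel q y| ≤
      q * (cappedKernel (q + 1) x + cappedKernel (q + 1) y) * ‖x - y‖ := by
  have hnorm : |max 1 ‖x‖ - max 1 ‖y‖| ≤ ‖x - y‖ := by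
    rw [max_comm 1, max_comm 1]
    exact (abs_max_sub_max_le_abs _ _ _).trans (abs_norm_sub_norm_le x y)
  have hpos := cappedKernel_pos (E := E) (q + 1)
  refine (abs_rpow_neg_sub_rpow_neg_le (by positivity) (by positivity) hq).trans ?_
  exact mul_le_mul_of_nonneg_left hnorm (mul_nonneg hq (add_pos (hpos x) (hpos y)).le)

lemma norm_div_norm_rpow_sub_mul_cappedKernel_le {F : E → ℝ} {r : ℝ} (hq : 0 ≤ q) (hqr : q ≤ r)
    {y : E} (hy : y ≠ 0) :
    ‖F y / ‖y‖ ^ q - F y * cappedKernel q y‖ ≤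
      (Metric.ball 0 1).indicator (fun y => ‖F y / ‖y‖ ^ r‖) y := by
  by_cases hball : y ∈ Metric.ball 0 1
  · have hpos : 0 < ‖y‖ := norm_pos_iff.2 hy
    have hy1 : ‖y‖ ≤ 1 := (mem_ball_zero_iff.1 hball).le
    have hone : 1 ≤ (‖y‖ ^ q)⁻¹ :=
      one_le_inv_iff₀.2 ⟨by positivity, Real.rpow_le_one hpos.le hy1 hq⟩
    rw [indicator_of_mem hball, cappedKernel_of_norm_le_one hy1, div_eq_mul_inv, div_eq_mul_inv,
      ← mul_sub, norm_mul, norm_mul, Real.norm_of_nonneg (sub_nonneg.2 hone),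
      Real.norm_of_nonneg (by positivity : 0 ≤ (‖y‖ ^ r)⁻¹)]
    gcongr
    calc (‖y‖ ^ q)⁻¹ - 1 ≤ (‖y‖ ^ q)⁻¹ := by linarith
      _ ≤ (‖y‖ ^ r)⁻¹ := by
          gcongr ?_⁻¹
          exact Real.rpow_le_rpow_of_exponent_ge hpos hy1 hqr
  · rw [indicator_of_notMem hball, cappedKernel_of_one_le_norm (by simpa using hball),
      div_eq_mul_inv, sub_self, norm_zero]

end CappedKernel

section Measure

variable {E : Type*} [NormedAddCommGroup E] [NormedSpace ℝ E] [MeasurableSpace E] {μ : Measure E}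

lemma tendsto_mul_integral_mul_cappedKernel_of_integrable {G : E → ℝ} (hG : Integrable G μ) :
    Tendsto (fun s : ℝ => s * ∫ y, G y * cappedKernel (finrank ℝ E + 2 * s) y ∂μ)
      (𝓝[>] 0) (𝓝 0) := by
  have hbound : ∀ᶠ s : ℝ in 𝓝[>] 0,
      ‖∫ y, G y * cappedKernel (finrank ℝ E + 2 * s) y ∂μ‖ ≤ ∫ y, ‖G y‖ ∂μ := by
    filter_upwards [self_mem_nhdsWithin] with s (hs : 0 < s)
    refine norm_integral_le_of_norm_le hG.norm (Eventually.of_forall fun y => ?_)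
    rw [norm_mul, Real.norm_of_nonneg (cappedKernel_pos _ y).le]
    exact mul_le_of_le_one_right (norm_nonneg _) (cappedKernel_le_one (by positivity) y)
  exact (tendsto_nhdsWithin_of_tendsto_nhds tendsto_id).zero_mul_isBoundedUnder_le
    (isBoundedUnder_of_eventually_le hbound)

end Measure

section Haar

variable {E : Type*} [NormedAddCommGroup E] [NormedSpace ℝ E] [FiniteDimensional ℝ E]
  [MeasurableSpace E] [BorelSpace E] {μ : Measure E} [μ.IsAddHaarMeasure] {q : ℝ}

lemma toSphere_real_univ_pos [Nontrivial E] : 0 < μ.toSphere.real univ :=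
  have : NeZero μ.toSphere := ⟨μ.toSphere_ne_zero⟩
  measureReal_univ_pos

lemma integrable_cappedKernel (hq : finrank ℝ E < q) : Integrable (cappedKernel q) μ := by
  have hq0 : 0 < q := (Nat.cast_nonneg _).trans_lt hq
  refine ((integrable_one_add_norm hq).const_mul ((1 / 2 : ℝ) ^ (-q))).mono'
    continuous_cappedKernel.aestronglyMeasurable (Eventually.of_forall fun y => ?_)
  have hhalf : 1 / 2 * (1 + ‖y‖) ≤ max 1 ‖y‖ := by
    linarith [le_max_left 1 ‖y‖, le_max_right 1 ‖y‖]
  rw [Real.norm_of_nonneg (cappedKernel_pos q y).le,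
    ← Real.mul_rpow (by norm_num) (by positivity)]
  exact Real.rpow_le_rpow_of_nonpos (by positivity) hhalf (neg_nonpos.2 hq0.le)

lemma integral_cappedKernel [Nontrivial E] (hq : finrank ℝ E < q) :
    ∫ y, cappedKernel q y ∂μ =
      μ.toSphere.real univ * (1 / finrank ℝ E + 1 / (q - finrank ℝ E)) := by
  set d := finrank ℝ E
  have hd : 1 ≤ d := finrank_pos
  set g : ℝ → ℝ := fun r => r ^ (d - 1) * max 1 r ^ (-q)
  have hg : IntegrableOn g (Ioi 0) :=
    (integrable_fun_norm_addHaar μ (f := fun r : ℝ => max 1 r ^ (-q))).1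
      (integrable_cappedKernel hq)
  have hball : ∫ r in Ioc 0 1, g r = 1 / d := by
    calc ∫ r in Ioc 0 1, g r = ∫ r in Ioc (0 : ℝ) 1, r ^ (d - 1) :=
          setIntegral_congr_fun measurableSet_Ioc fun r hr => by simp [g, max_eq_left hr.2]
      _ = 1 / d := by
          rw [← intervalIntegral.integral_of_le zero_le_one, integral_pow]
          simp [Nat.cast_sub hd, zero_pow (by lia : d - 1 + 1 ≠ 0)]
  have htail : ∫ r in Ioi 1, g r = 1 / (q - d) := by
    calc ∫ r in Ioi 1, g r = ∫ r in Ioi (1 : ℝ), r ^ (d - 1 - q) :=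
          setIntegral_congr_fun measurableSet_Ioi fun r (hr : 1 < r) => by
            simp only [g]
            rw [max_eq_right hr.le, ← Real.rpow_natCast, ← Real.rpow_add (by linarith),
              Nat.cast_sub hd, Nat.cast_one, sub_eq_add_neg _ q]
      _ = 1 / (q - d) := by
          rw [integral_Ioi_rpow_of_lt (by linarith) one_pos, Real.one_rpow, ← neg_sub q, neg_div,
            ← div_neg]
          ring_nf
  calc ∫ y, cappedKernel q y ∂μ = μ.toSphere.real univ * ∫ r in Ioi 0, g r := by
        rw [μ.toSphere_real_apply_univ]
        simpa only [cappedKernel, g, nsmul_eq_mul, smul_eq_mul, mul_assoc] using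
          integral_fun_norm_addHaar μ fun r : ℝ => max 1 r ^ (-q)
    _ = μ.toSphere.real univ * (1 / d + 1 / (q - d)) := by
        rw [← Ioc_union_Ioi_eq_Ioi zero_le_one, setIntegral_union (Ioc_disjoint_Ioi le_rfl)
          measurableSet_Ioi (hg.mono_set Ioc_subset_Ioi_self)
          (hg.mono_set (Ioi_subset_Ioi zero_le_one)), hball, htail]

lemma tendsto_mul_integral_cappedKernel [Nontrivial E] :
    Tendsto (fun s : ℝ => s * ∫ y, cappedKernel (finrank ℝ E + 2 * s) y ∂μ) (𝓝[>] 0)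
      (𝓝 (μ.toSphere.real univ / 2)) := by
  have hcont : Tendsto (fun s : ℝ => μ.toSphere.real univ * (s / finrank ℝ E + 1 / 2)) (𝓝[>] 0)
      (𝓝 (μ.toSphere.real univ * (0 / finrank ℝ E + 1 / 2))) :=
    tendsto_nhdsWithin_of_tendsto_nhds (Continuous.tendsto (by fun_prop) 0)
  rw [zero_div, zero_add, mul_one_div] at hcont
  refine hcont.congr' ?_
  filter_upwards [self_mem_nhdsWithin] with s (hs : 0 < s)
  rw [integral_cappedKernel (by linarith), add_sub_cancel_left]
  field_simp

lemma abs_integral_mul_cappedKernel_le_of_antiperiodic {G : E → ℝ} {v : E} {M : ℝ}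
    (hG : AEStronglyMeasurable G μ) (hM : ∀ y, |G y| ≤ M) (hv : Function.Antiperiodic G v)
    (hq : finrank ℝ E < q) :
    |∫ y, G y * cappedKernel q y ∂μ| ≤ M * q * ‖v‖ * ∫ y, cappedKernel (q + 1) y ∂μ := by
  have hq0 : 0 < q := (Nat.cast_nonneg _).trans_lt hq
  have hk : Integrable (cappedKernel q) μ := integrable_cappedKernel hq
  have hk' : Integrable (cappedKernel (q + 1)) μ := integrable_cappedKernel (by linarith)
  have hGk := hk.bdd_mul hG (Eventually.of_forall hM)
  have hGkv := (hk.comp_add_right v).bdd_mul hG (Eventually.of_forall hM)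
  have hshift : ∫ y, G y * cappedKernel q y ∂μ = -∫ y, G y * cappedKernel q (y + v) ∂μ := by
    rw [← integral_add_right_eq_self _ v, ← integral_neg]
    simp only [hv _, neg_mul]
  have hdouble : 2 * ∫ y, G y * cappedKernel q y ∂μ =
      ∫ y, G y * (cappedKernel q y - cappedKernel q (y + v)) ∂μ := by
    simp only [mul_sub]
    rw [integral_sub hGk hGkv]
    linarith
  have hpointwise (y : E) : ‖G y * (cappedKernel q y - cappedKernel q (y + v))‖ ≤
      M * q * ‖v‖ * (cappedKernel (q + 1) y + cappedKernel (q + 1) (y + v)) := by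
    have hdiff := abs_cappedKernel_sub_le hq0.le y (y + v)
    rw [sub_add_cancel_left, norm_neg] at hdiff
    rw [norm_mul]
    calc ‖G y‖ * ‖cappedKernel q y - cappedKernel q (y + v)‖
        ≤ M * (q * (cappedKernel (q + 1) y + cappedKernel (q + 1) (y + v)) * ‖v‖) :=
          mul_le_mul (hM y) hdiff (norm_nonneg _) ((abs_nonneg _).trans (hM y))
      _ = _ := by ring
  have hintegral := norm_integral_le_of_norm_le ((hk'.add (hk'.comp_add_right v)).const_mul
    (M * q * ‖v‖)) (Eventually.of_forall hpointwise)
  simp only [Pi.add_apply] at hintegral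
  rw [← hdouble, Real.norm_eq_abs, abs_mul, abs_two, integral_const_mul,
    integral_add hk' (hk'.comp_add_right v), integral_add_right_eq_self (cappedKernel (q + 1)) v]
    at hintegral
  linarith

lemma tendsto_mul_integral_mul_cappedKernel_of_antiperiodic [Nontrivial E] {G : E → ℝ} {v : E}
    {M : ℝ} (hG : AEStronglyMeasurable G μ) (hM : ∀ y, |G y| ≤ M)
    (hv : Function.Antiperiodic G v) :
    Tendsto (fun s : ℝ => s * ∫ y, G y * cappedKernel (finrank ℝ E + 2 * s) y ∂μ)
      (𝓝[>] 0) (𝓝 0) := by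
  set d : ℝ := (finrank ℝ E : ℝ)
  set B : ℝ → ℝ := fun s =>
    M * (d + 2 * s) * ‖v‖ * (μ.toSphere.real univ * (1 / d + 1 / (1 + 2 * s)))
  have hB : Tendsto (fun s : ℝ => s * B s) (𝓝[>] 0) (𝓝 0) := by
    have hcont : ContinuousAt (fun s : ℝ => s * B s) 0 := by
      simp only [B]
      fun_prop (disch := norm_num)
    simpa using hcont.tendsto.mono_left nhdsWithin_le_nhds
  refine squeeze_zero_norm' ?_ hB
  filter_upwards [self_mem_nhdsWithin] with s (hs : 0 < s)
  rw [norm_mul, Real.norm_of_nonneg hs.le]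
  gcongr
  have hbound := abs_integral_mul_cappedKernel_le_of_antiperiodic hG hM hv
    (q := d + 2 * s) (by linarith)
  rwa [integral_cappedKernel (by linarith), show d + 2 * s + 1 - d = 1 + 2 * s by ring] at hbound

lemma abs_integral_div_norm_rpow_sub_le [Nontrivial E] {F : E → ℝ} {r : ℝ} (hq : 0 ≤ q)
    (hqr : q ≤ r) (hball : IntegrableOn (fun y => F y / ‖y‖ ^ r) (Metric.ball 0 1) μ)
    (hF : Integrable (fun y => F y * cappedKernel q y) μ) :
    |∫ y, F y / ‖y‖ ^ q ∂μ - ∫ y, F y * cappedKernel q y ∂μ| ≤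
      ∫ y in Metric.ball 0 1, ‖F y / ‖y‖ ^ r‖ ∂μ := by
  have hmeas : AEStronglyMeasurable F μ := by
    have hinv : Continuous fun y : E => (cappedKernel q y)⁻¹ :=
      continuous_cappedKernel.inv₀ fun y => (cappedKernel_pos q y).ne'
    refine (hF.1.mul hinv.aestronglyMeasurable).congr (Eventually.of_forall fun y => ?_)
    exact mul_inv_cancel_right₀ (cappedKernel_pos q y).ne' (F y)
  have hbound : ∀ᵐ y ∂μ, ‖F y / ‖y‖ ^ q - F y * cappedKernel q y‖ ≤
      (Metric.ball 0 1).indicator (fun y => ‖F y / ‖y‖ ^ r‖) y := by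
    filter_upwards [compl_mem_ae_iff.2 (measure_singleton (0 : E))] with y hy
    exact norm_div_norm_rpow_sub_mul_cappedKernel_le hq hqr hy
  have hmaj : Integrable ((Metric.ball 0 1).indicator fun y => ‖F y / ‖y‖ ^ r‖) μ :=
    IntegrableOn.integrable_indicator hball.norm measurableSet_ball
  have hdiff : Integrable (fun y => F y / ‖y‖ ^ q - F y * cappedKernel q y) μ :=
    hmaj.mono' ((hmeas.div₀ (by fun_prop)).sub hF.1) hbound
  have hsing : Integrable (fun y => F y / ‖y‖ ^ q) μ :=
    (hdiff.add hF).congr (Eventually.of_forall fun y => sub_add_cancel _ _)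
  rw [← integral_sub hsing hF, ← integral_indicator measurableSet_ball]
  exact norm_integral_le_of_norm_le hmaj hbound

lemma tendsto_mul_integral_add_const_div_norm_rpow [Nontrivial E] {G : E → ℝ} {c σ : ℝ}
    (hσ : 0 < σ)
    (hball : IntegrableOn (fun y => (G y + c) / ‖y‖ ^ (finrank ℝ E + 2 * σ)) (Metric.ball 0 1) μ)
    (hG : ∀ s : ℝ, 0 < s → Integrable (fun y => G y * cappedKernel (finrank ℝ E + 2 * s) y) μ)
    (hlim : Tendsto (fun s : ℝ => s * ∫ y, G y * cappedKernel (finrank ℝ E + 2 * s) y ∂μ)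
      (𝓝[>] 0) (𝓝 0)) :
    Tendsto (fun s : ℝ => s * ∫ y, (G y + c) / ‖y‖ ^ (finrank ℝ E + 2 * s) ∂μ) (𝓝[>] 0)
      (𝓝 (c * (μ.toSphere.real univ / 2))) := by
  set k : ℝ → E → ℝ := fun s => cappedKernel (finrank ℝ E + 2 * s)
  have hk : ∀ s : ℝ, 0 < s → Integrable (k s) μ := fun s hs => integrable_cappedKernel (by linarith)
  have hcapped : Tendsto (fun s : ℝ => s * ∫ y, (G y + c) * k s y ∂μ) (𝓝[>] 0)
      (𝓝 (c * (μ.toSphere.real univ / 2))) := by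
    have h := hlim.add ((tendsto_mul_integral_cappedKernel (μ := μ)).const_mul c)
    rw [zero_add] at h
    refine h.congr' ?_
    filter_upwards [self_mem_nhdsWithin] with s hs
    simp only [add_mul]
    rw [integral_add (hG s hs) ((hk s hs).const_mul c), integral_const_mul]
    ring
  have hdiff : Tendsto (fun s : ℝ => s * (∫ y, (G y + c) / ‖y‖ ^ (finrank ℝ E + 2 * s) ∂μ -
      ∫ y, (G y + c) * k s y ∂μ)) (𝓝[>] 0) (𝓝 0) := by
    refine (tendsto_nhdsWithin_of_tendsto_nhds tendsto_id).zero_mul_isBoundedUnder_le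
      (isBoundedUnder_of_eventually_le
        (a := ∫ y in Metric.ball 0 1, ‖(G y + c) / ‖y‖ ^ (finrank ℝ E + 2 * σ)‖ ∂μ) ?_)
    filter_upwards [Ioo_mem_nhdsGT hσ] with s ⟨hs, hsσ⟩
    refine abs_integral_div_norm_rpow_sub_le (by positivity) (by linarith) hball ?_
    simp only [add_mul]
    exact (hG s hs).add ((hk s hs).const_mul c)
  simpa [mul_sub] using hdiff.add hcapped

lemma integrableOn_ball_div_norm_rpow {F : E → ℝ} {C α r : ℝ} (hF : AEStronglyMeasurable F μ)
    (hC : ∀ y ∈ Metric.ball 0 r, |F y| ≤ C * ‖y‖ ^ α) (hq : q < finrank ℝ E + α) :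
    IntegrableOn (fun y => F y / ‖y‖ ^ q) (Metric.ball 0 r) μ := by
  cases subsingleton_or_nontrivial E
  · exact Integrable.of_subsingleton.integrableOn
  refine integrableOn_ball_of_norm_le_rpow finrank_pos (C := C) (α := q - α) (by linarith) ?_
    (hF.div₀ (Measurable.aestronglyMeasurable (by fun_prop)))
  filter_upwards [ae_restrict_mem measurableSet_ball,
    ae_restrict_of_ae (compl_mem_ae_iff.2 (measure_singleton (0 : E)))] with y hball hy
  have hpos : 0 < ‖y‖ := norm_pos_iff.2 hy
  rw [norm_div, Real.norm_of_nonneg (by positivity : 0 ≤ ‖y‖ ^ q), neg_sub, Real.rpow_sub hpos,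
    ← mul_div_assoc]
  gcongr
  exact hC y hball

lemma tendsto_mul_integral_one_sub_cos_div_norm_rpow {l : E →L[ℝ] ℝ} (hl : l ≠ 0) :
    Tendsto (fun s : ℝ => s * ∫ y, (1 - Real.cos (l y)) / ‖y‖ ^ (finrank ℝ E + 2 * s) ∂μ) (𝓝[>] 0)
      (𝓝 (μ.toSphere.real univ / 2)) := by
  obtain ⟨v, hv⟩ : ∃ v, l v = Real.pi :=
    LinearMap.surjective_of_ne_zero (f := (l : E →ₗ[ℝ] ℝ)) (by exact_mod_cast hl) Real.pi
  have : Nontrivial E := ⟨v, 0, fun h => Real.pi_ne_zero (by rw [← hv, h, map_zero])⟩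
  have hcont : Continuous fun y => -Real.cos (l y) := by fun_prop
  have hbdd (y : E) : |-Real.cos (l y)| ≤ 1 := by
    simpa using Real.abs_cos_le_one (l y)
  have hanti : Function.Antiperiodic (fun y => -Real.cos (l y)) v := fun y => by
    simp [hv, Real.cos_add_pi]
  have hzero (y : E) : |-Real.cos (l y) + 1| ≤ ‖l‖ * ‖y‖ ^ (1 : ℝ) := by
    have hcos := Real.abs_cos_sub_cos_le 0 (l y)
    rw [Real.cos_zero, sub_eq_neg_add, zero_sub, abs_neg] at hcos
    simpa using hcos.trans (l.le_opNorm y)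
  simpa [sub_eq_neg_add] using tendsto_mul_integral_add_const_div_norm_rpow (μ := μ)
    (by norm_num : (0 : ℝ) < 1 / 4)
    (integrableOn_ball_div_norm_rpow (hcont.add_const 1).aestronglyMeasurable
      (fun y _ => hzero y) (by norm_num))
    (fun s hs => (integrable_cappedKernel (by linarith)).bdd_mul hcont.aestronglyMeasurable
      (Eventually.of_forall hbdd))
    (tendsto_mul_integral_mul_cappedKernel_of_antiperiodic hcont.aestronglyMeasurable hbdd hanti)

lemma tendsto_mul_integral_secondDiff_div_norm_rpow [Nontrivial E] {u : E → ℝ}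
    (hu : Integrable u μ) {x : E} {σ : ℝ} (hσ : 0 < σ)
    (hball : IntegrableOn (fun y => (u (x + y) + u (x - y) - 2 * u x) /
      ‖y‖ ^ (finrank ℝ E + 2 * σ)) (Metric.ball 0 1) μ) :
    Tendsto (fun s : ℝ => s * ∫ y, (u (x + y) + u (x - y) - 2 * u x) /
      ‖y‖ ^ (finrank ℝ E + 2 * s) ∂μ) (𝓝[>] 0) (𝓝 (-(u x * μ.toSphere.real univ))) := by
  have hG : Integrable (fun y => u (x + y) + u (x - y)) μ :=
    (hu.comp_add_left x).add (hu.comp_sub_left x)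
  have hlim := tendsto_mul_integral_add_const_div_norm_rpow (c := -(2 * u x)) hσ hball
    (fun s hs => hG.mul_bdd (c := 1) continuous_cappedKernel.aestronglyMeasurable
      (Eventually.of_forall fun y => by
        rw [Real.norm_of_nonneg (cappedKernel_pos _ y).le]
        exact cappedKernel_le_one (by positivity) y))
    (tendsto_mul_integral_mul_cappedKernel_of_integrable hG)
  simp only [← sub_eq_add_neg] at hlim
  rwa [show -(2 * u x) * (μ.toSphere.real univ / 2) = -(u x * μ.toSphere.real univ) by ring] at hlim

lemma integrableOn_ball_secondDiff_div_norm_rpow_of_lipschitzWith {u : E → ℝ} {K : NNReal}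
    (hu : LipschitzWith K u) (x : E) {r : ℝ} (hq : q < finrank ℝ E + 1) :
    IntegrableOn (fun y => (u (x + y) + u (x - y) - 2 * u x) / ‖y‖ ^ q) (Metric.ball 0 r) μ := by
  have hcont := hu.continuous
  refine integrableOn_ball_div_norm_rpow (C := 2 * K) (α := 1)
    (Continuous.aestronglyMeasurable (by fun_prop)) (fun y _ => ?_) hq
  have hplus := hu.norm_sub_le (x + y) x
  have hminus := hu.norm_sub_le (x - y) x
  simp only [add_sub_cancel_left, sub_sub_cancel_left, norm_neg, Real.norm_eq_abs] at hplus hminus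
  calc |u (x + y) + u (x - y) - 2 * u x| = |(u (x + y) - u x) + (u (x - y) - u x)| := by ring_nf
    _ ≤ K * ‖y‖ + K * ‖y‖ := (abs_add_le _ _).trans (add_le_add hplus hminus)
    _ = 2 * K * ‖y‖ ^ (1 : ℝ) := by rw [Real.rpow_one]; ring

end Haar

section FractionalLaplacian

variable {n : ℕ}

lemma tendsto_fracLapConst_div (hn : 0 < n) :
    Tendsto (fun s : ℝ => fracLapConst n hn s / s) (𝓝[>] 0)
      (𝓝 (2 / (volume : Measure (EuclideanSpace ℝ (Fin n))).toSphere.real univ)) := by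
  have : Nonempty (Fin n) := ⟨⟨0, hn⟩⟩
  have hproj : EuclideanSpace.proj (𝕜 := ℝ) (⟨0, hn⟩ : Fin n) ≠ 0 := fun h => by
    simpa using DFunLike.congr_fun h (EuclideanSpace.single ⟨0, hn⟩ 1)
  have hlim := (tendsto_mul_integral_one_sub_cos_div_norm_rpow (μ := volume) hproj).inv₀
    (half_pos toSphere_real_univ_pos).ne'
  simpa [fracLapConst, div_eq_inv_mul, mul_comm] using hlim

/-- With `hu`, which controls the tail, `hball` says that the integral defining `(−Δ)^σ u (x)`
converges absolutely. -/
theorem fracLap_tendsto_id_general (hn : 0 < n) {u : EuclideanSpace ℝ (Fin n) → ℝ}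
    (hu : Integrable u) {x : EuclideanSpace ℝ (Fin n)} {σ : ℝ} (hσ : 0 < σ)
    (hball : IntegrableOn (fun y => (u (x + y) + u (x - y) - 2 * u x) / ‖y‖ ^ (n + 2 * σ))
      (Metric.ball 0 1)) :
    Tendsto (fun s => fracLap n hn s u x) (𝓝[>] 0) (𝓝 (u x)) := by
  have : Nonempty (Fin n) := ⟨⟨0, hn⟩⟩
  set ω := (volume : Measure (EuclideanSpace ℝ (Fin n))).toSphere.real univ
  have hω : ω ≠ 0 := toSphere_real_univ_pos.ne'
  have hintegral := tendsto_mul_integral_secondDiff_div_norm_rpow hu hσ (by simpa using hball)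
  have hlim := ((tendsto_fracLapConst_div hn).const_mul (-(1 / 2))).mul hintegral
  rw [show -(1 / 2) * (2 / ω) * -(u x * ω) = u x by field_simp] at hlim
  refine hlim.congr' ?_
  filter_upwards [self_mem_nhdsWithin] with s (hs : 0 < s)
  rw [finrank_euclideanSpace_fin, fracLap]
  field_simp

end FractionalLaplacian

/-- For `n > 1` and `u ∈ C₀^∞(ℝⁿ)`, `(−Δ)^s u(x) → u(x)` as `s → 0⁺`, for every `x`. -/
theorem fracLap_tendsto_id (n : ℕ) (hn : 1 < n) (u : EuclideanSpace ℝ (Fin n) → ℝ)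
    (hsmooth : ContDiff ℝ (⊤ : ℕ∞) u) (hsupp : HasCompactSupport u) (x : EuclideanSpace ℝ (Fin n)) :
    Tendsto (fun s => fracLap n (by omega) s u x)
      (nhdsWithin 0 (Set.Ioi 0)) (nhds (u x)) := by
  obtain ⟨K, hK⟩ := ContDiff.lipschitzWith_of_hasCompactSupport hsupp hsmooth (by simp)
  exact fracLap_tendsto_id_general _ (hsmooth.continuous.integrable_of_hasCompactSupport hsupp)
    (by norm_num : (0 : ℝ) < 1 / 4)
    (integrableOn_ball_secondDiff_div_norm_rpow_of_lipschitzWith hK x (by norm_num))
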